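/- For every integer r ≥ 1, the ℤ-subalgebra of ℚ(x_1,…,x_r) generated by all generalized cluster variables {X(l,n) : 1 ≤ l ≤ r, n ∈ ℕ} is equal to the ℤ-subalgebra generated by the finitely many generalized cluster variables {X(l,n) : 1 ≤ l ≤ r, 0 ≤ n ≤ r-1} attached to the exceptional indecomposable representations. (In the paper's notation: the algebra 𝒜ℋ generated by all X_M, M a nilpotent representation of the cyclic quiver, coincides with the cluster algebra ℰℋ generated by the X_M with M rigid, since X of a direct sum is the product of the X's of its indecomposable summands and the rigid indecomposables are exactly the E_l[n] with n ≤ r-1.) -/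

import Mathlib

/-- The ambient field `ℚ(x_1, …, x_r)`, realized as the fraction field of the
polynomial ring over `ℚ` in variables indexed by `ZMod r` (so indices are
automatically read modulo `r`). -/
noncomputable abbrev CyclicField (r : ℕ) : Type :=
  FractionRing (MvPolynomial (ZMod r) ℚ)

/-- The variable `x_i` for `i : ℤ`, with `x_{i+r} = x_i`. -/
noncomputable def xv (r : ℕ) (i : ℤ) : CyclicField r :=
  algebraMap (MvPolynomial (ZMod r) ℚ) (CyclicField r) (MvPolynomial.X (i : ZMod r))

/-- The generalized cluster variable `X(l, n)` (the image of the indecomposable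
nilpotent representation `E_l[n]` under the Caldero–Chapoton map):
`X(l,0) = 1` and, for `n ≥ 1`,
`X(l,n) = x_{l+n}/x_l + Σ_{k=1}^{n-1} (x_{l+n}·x_{l+r-1})/(x_{l+k-1}·x_{l+k}) + x_{l+r-1}/x_{l+n-1}`. -/
noncomputable def Xgcv (r : ℕ) (l : ℤ) : ℕ → CyclicField r
  | 0 => 1
  | n + 1 =>
      xv r (l + n + 1) / xv r l
        + ∑ k ∈ Finset.Icc 1 n,
            (xv r (l + n + 1) * xv r (l + r - 1)) / (xv r (l + k - 1) * xv r (l + k))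
        + xv r (l + r - 1) / xv r (l + n)

/-!
The variables `X l n` make sense for any nowhere zero sequence `x`. Adding one summand to the closed
form gives the first-order relation `x_{l+n} X l (n+1) = x_{l+n+1} X l n + x_{l-1}`, whose
inhomogeneous term does not depend on `n`. Subtracting two consecutive instances yields
`X l (n+2) = X (l+n+1) 1 * X l (n+1) - X l n`, so every `X l n` is an integer polynomial in the
`X m 1`. For `r ≥ 2` periodicity turns the `X m 1` into generators of the smaller algebra, and for
`r = 1` they are all equal to `2`.
-/

section GeneralizedClusterVariable

variable {K : Type*} [Field K] {x : ℤ → K}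

/-- The generalized cluster variable `X(l, n)` evaluated at a sequence `x` of field elements. The
two boundary terms of the Caldero–Chapoton formula are the summands `k = 0` and `k = n`, and
`x_{l+r-1}` is written `x_{l-1}`, so that no period `r` is involved. -/
def generalizedClusterVariable (x : ℤ → K) (l : ℤ) (n : ℕ) : K :=
  x (l + n) * x (l - 1) * ∑ k ∈ Finset.range (n + 1), (x (l + k - 1) * x (l + k))⁻¹

lemma generalizedClusterVariable_zero (hx : ∀ i, x i ≠ 0) (l : ℤ) :
    generalizedClusterVariable x l 0 = 1 := by
  have hl := hx l
  have hl_pred := hx (l - 1)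
  simp only [generalizedClusterVariable, zero_add, Finset.sum_range_one, Nat.cast_zero, add_zero]
  field_simp

lemma mul_generalizedClusterVariable_succ (hx : ∀ i, x i ≠ 0) (l : ℤ) (n : ℕ) :
    x (l + n) * generalizedClusterVariable x l (n + 1) =
      x (l + n + 1) * generalizedClusterVariable x l n + x (l - 1) := by
  have hn := hx (l + n)
  have hn_succ := hx (l + n + 1)
  simp only [generalizedClusterVariable, Finset.sum_range_succ _ (n + 1), Nat.cast_add_one,
    ← add_assoc, add_sub_cancel_right]
  field_simp

lemma generalizedClusterVariable_one (hx : ∀ i, x i ≠ 0) (l : ℤ) :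
    generalizedClusterVariable x l 1 = (x (l + 1) + x (l - 1)) / x l := by
  have h := mul_generalizedClusterVariable_succ hx l 0
  rw [generalizedClusterVariable_zero hx, Nat.cast_zero, add_zero, zero_add, mul_one] at h
  rw [eq_div_iff (hx l), mul_comm, h]

lemma generalizedClusterVariable_add_two (hx : ∀ i, x i ≠ 0) (l : ℤ) (n : ℕ) :
    generalizedClusterVariable x l (n + 2) =
      generalizedClusterVariable x (l + n + 1) 1 * generalizedClusterVariable x l (n + 1) -
        generalizedClusterVariable x l n := by
  have hn := mul_generalizedClusterVariable_succ hx l n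
  have hn_succ := mul_generalizedClusterVariable_succ hx l (n + 1)
  rw [Nat.cast_add_one, ← add_assoc] at hn_succ
  have h_ne := hx (l + n + 1)
  rw [generalizedClusterVariable_one hx, add_sub_cancel_right]
  field_simp
  linear_combination hn_succ - hn

lemma generalizedClusterVariable_mem {S : Type*} [SetLike S K] [SubringClass S K] {s : S}
    (hx : ∀ i, x i ≠ 0) (h_one : ∀ m, generalizedClusterVariable x m 1 ∈ s) (l : ℤ) (n : ℕ) :
    generalizedClusterVariable x l n ∈ s := by
  induction n using Nat.twoStepInduction with
  | zero => exact generalizedClusterVariable_zero hx l ▸ one_mem s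
  | one => exact h_one l
  | more n ih ih_succ =>
    rw [generalizedClusterVariable_add_two hx]
    exact sub_mem (mul_mem (h_one _) ih_succ) ih

lemma generalizedClusterVariable_periodic {c : ℤ} (hper : Function.Periodic x c) (n : ℕ) :
    Function.Periodic (generalizedClusterVariable x · n) c := by
  intro l
  simp only [generalizedClusterVariable, add_right_comm l c, add_sub_right_comm _ c, hper _]

lemma generalizedClusterVariable_one_eq_two (hx : ∀ i, x i ≠ 0) (hper : Function.Periodic x 1)
    (l : ℤ) : generalizedClusterVariable x l 1 = 2 := by
  rw [generalizedClusterVariable_one hx, hper l, hper.sub_eq l, ← two_mul,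
    mul_div_cancel_right₀ _ (hx l)]

variable (R : Type*) [CommRing R] [Algebra R K]

lemma generalizedClusterVariable_one_mem_adjoin (hx : ∀ i, x i ≠ 0) {r : ℕ} (hr : 1 ≤ r)
    (hper : Function.Periodic x r) (m : ℤ) :
    generalizedClusterVariable x m 1 ∈ Algebra.adjoin R
      {y | ∃ (l : ℤ) (n : ℕ), 1 ≤ l ∧ l ≤ r ∧ n ≤ r - 1 ∧
        y = generalizedClusterVariable x l n} := by
  obtain rfl | hr_one_lt := hr.eq_or_lt
  · rw [generalizedClusterVariable_one_eq_two hx (by exact_mod_cast hper)]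
    exact ofNat_mem _ 2
  · obtain ⟨l, ⟨hl_pos, hl_le⟩, hml⟩ :=
      (generalizedClusterVariable_periodic hper 1).exists_mem_Ioc (by omega) m 0
    exact Algebra.subset_adjoin ⟨l, 1, hl_pos, by simpa using hl_le, by omega, hml⟩

theorem stmt11_general (hx : ∀ i, x i ≠ 0) {r : ℕ} (hper : Function.Periodic x r) :
    Algebra.adjoin R
        {y | ∃ (l : ℤ) (n : ℕ), 1 ≤ l ∧ l ≤ r ∧ y = generalizedClusterVariable x l n} =
      Algebra.adjoin R
        {y | ∃ (l : ℤ) (n : ℕ), 1 ≤ l ∧ l ≤ r ∧ n ≤ r - 1 ∧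
          y = generalizedClusterVariable x l n} := by
  apply le_antisymm
  · apply Algebra.adjoin_le
    rintro _ ⟨l, n, hl_pos, hl_le, rfl⟩
    have hr : 1 ≤ r := by omega
    exact generalizedClusterVariable_mem hx
      (generalizedClusterVariable_one_mem_adjoin R hx hr hper) l n
  · apply Algebra.adjoin_mono
    rintro _ ⟨l, n, hl_pos, hl_le, -, rfl⟩
    exact ⟨l, n, hl_pos, hl_le, rfl⟩

end GeneralizedClusterVariable

lemma xv_ne_zero (r : ℕ) (i : ℤ) : xv r i ≠ 0 :=
  (FaithfulSMul.algebraMap_eq_zero_iff _ _).not.mpr (MvPolynomial.X_ne_zero _)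

lemma xv_periodic (r : ℕ) : Function.Periodic (xv r) r := by
  intro i
  simp only [xv, Int.cast_add, Int.cast_natCast, CharP.cast_eq_zero, add_zero]

lemma Xgcv_eq_generalizedClusterVariable (r : ℕ) (l : ℤ) (n : ℕ) :
    Xgcv r l n = generalizedClusterVariable (xv r) l n := by
  cases n with
  | zero => rw [generalizedClusterVariable_zero (xv_ne_zero r), Xgcv]
  | succ n =>
    have hl_pred := xv_ne_zero r (l - 1)
    have hn_succ := xv_ne_zero r (l + n + 1)
    rw [Xgcv, generalizedClusterVariable, add_sub_right_comm, xv_periodic r, Finset.sum_range_succ,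
      Finset.sum_range_eq_add_Ico _ n.add_one_pos, Finset.Ico_add_one_right_eq_Icc]
    simp only [Nat.cast_add_one, Nat.cast_zero, add_zero, ← add_assoc, add_sub_cancel_right,
      mul_add, Finset.mul_sum, div_eq_mul_inv]
    field_simp

/-- the `ℤ`-subalgebra of `ℚ(x_1,…,x_r)` generated by all generalized
cluster variables `X(l, n)` coincides with the one generated by the `X(l, n)` with
`n ≤ r - 1` (those attached to the rigid indecomposables). -/
theorem stmt11 (r : ℕ) (hr : 1 ≤ r) :
    Algebra.adjoin ℤ {x : CyclicField r | ∃ (l : ℤ) (n : ℕ), 1 ≤ l ∧ l ≤ r ∧ x = Xgcv r l n} =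
      Algebra.adjoin ℤ
        {x : CyclicField r |
          ∃ (l : ℤ) (n : ℕ), 1 ≤ l ∧ l ≤ r ∧ n ≤ r - 1 ∧ x = Xgcv r l n} := by
  simp only [Xgcv_eq_generalizedClusterVariable]
  exact stmt11_general ℤ (xv_ne_zero r) (xv_periodic r)
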